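/- Let M be an R-module of finite Gorenstein weak injective dimension. Then Gwid_R(M) ≤ n if and only if Ext^i_R(W, M) = 0 for every weak injective module W and every i ≥ n + 1, if and only if for every exact sequence 0 → M → I^0 → ⋯ → I^{n−1} → C^n → 0 with each I^i injective, the cokernel C^n is Gorenstein weak injective. -/

import Mathlib

open CategoryTheory

universe u

noncomputable section

variable (R : Type u) [Ring R]

/-- Vanishing of `Ext^n_R(N, M)` for left `R`-modules, expressed via the `Ext` bifunctor
on the `ℤ`-linear abelian category `ModuleCat R`. -/
def ExtVanish (n : ℕ) (N M : ModuleCat.{u} R) : Prop :=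
  Subsingleton (((_root_.Ext ℤ (ModuleCat.{u} R) n).obj (Opposite.op N)).obj M)

/-- An `R`-module is super finitely presented if it admits a resolution by
finitely generated projective modules. -/
def SuperFinitelyPresented (N : ModuleCat.{u} R) : Prop :=
  ∃ (F : ℕ → ModuleCat.{u} R) (d : ∀ n, F (n + 1) →ₗ[R] F n) (ε : F 0 →ₗ[R] N),
    (∀ n, Module.Finite R (F n)) ∧ (∀ n, Module.Projective R (F n)) ∧
    Function.Surjective ε ∧ Function.Exact (d 0) ε ∧
    (∀ n, Function.Exact (d (n + 1)) (d n))

/-- An `R`-module `W` is weak injective if `Ext^1_R(N, W) = 0` for every super finitely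
presented module `N`. -/
def WeakInjective (W : ModuleCat.{u} R) : Prop :=
  ∀ N : ModuleCat.{u} R, SuperFinitelyPresented R N → ExtVanish R 1 N W

/-- `wid_R M ≤ n` : `Ext^{n+1}_R(N, M) = 0` for every super finitely presented `N`. -/
def WidLE (M : ModuleCat.{u} R) (n : ℕ) : Prop :=
  ∀ N : ModuleCat.{u} R, SuperFinitelyPresented R N → ExtVanish R (n + 1) N M

/-- The weak injective dimension, as an element of `ℕ∞`. -/
def Wid (M : ModuleCat.{u} R) : ℕ∞ :=
  sInf {c : ℕ∞ | ∃ n : ℕ, c = n ∧ WidLE R M n}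

/-- A doubly infinite exact complex of injective modules which stays exact after applying
`Hom_R(W, -)` for every module `W` in the test class `𝒯`. -/
def IsTotallyAcyclicInjComplex (𝒯 : ModuleCat.{u} R → Prop)
    (I : ℤ → ModuleCat.{u} R) (d : ∀ n : ℤ, I n →ₗ[R] I (n + 1)) : Prop :=
  (∀ n, Module.Injective R (I n)) ∧
  (∀ n, Function.Exact (d n) (d (n + 1))) ∧
  (∀ W : ModuleCat.{u} R, 𝒯 W → ∀ n,
    Function.Exact (fun g : W →ₗ[R] I n => (d n).comp g)
      (fun g : W →ₗ[R] I (n + 1) => (d (n + 1)).comp g))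

/-- `M` is Gorenstein injective relative to the test class `𝒯` : `M` is the cokernel
`Coker (I_1 → I_0)` of a `Hom(𝒯, -)`-exact exact complex of injective modules. -/
def GorensteinRelInjective (𝒯 : ModuleCat.{u} R → Prop) (M : ModuleCat.{u} R) : Prop :=
  ∃ (I : ℤ → ModuleCat.{u} R) (d : ∀ n : ℤ, I n →ₗ[R] I (n + 1)) (π : I 0 →ₗ[R] M),
    IsTotallyAcyclicInjComplex R 𝒯 I d ∧
    Function.Surjective π ∧ Function.Exact (d (-1)) π

/-- Gorenstein weak injective modules: the test class is that of weak injective modules. -/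
def GorensteinWeakInjective (M : ModuleCat.{u} R) : Prop :=
  GorensteinRelInjective R (WeakInjective R) M

/-- Gorenstein injective modules: the test class is that of injective modules. -/
def GorensteinInjective (M : ModuleCat.{u} R) : Prop :=
  GorensteinRelInjective R (fun E => Module.Injective R E) M

/-- The data of an exact sequence `0 → M → G^0 → ⋯ → G^n → 0` (the modules `G^i` for
`i > n` being trivial). -/
def IsFiniteCoresolution (M : ModuleCat.{u} R) (n : ℕ) (G : ℕ → ModuleCat.{u} R)
    (d : ∀ i, G i →ₗ[R] G (i + 1)) (ε : M →ₗ[R] G 0) : Prop :=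
  Function.Injective ε ∧ Function.Exact ε (d 0) ∧
  (∀ i, Function.Exact (d i) (d (i + 1))) ∧
  (∀ i, n < i → ∀ x : G i, x = 0)

/-- `Gwid_R M ≤ n` : `M` has a coresolution of length `n` by Gorenstein weak injective
modules. -/
def GwidLE (M : ModuleCat.{u} R) (n : ℕ) : Prop :=
  ∃ (G : ℕ → ModuleCat.{u} R) (d : ∀ i, G i →ₗ[R] G (i + 1)) (ε : M →ₗ[R] G 0),
    IsFiniteCoresolution R M n G d ε ∧ ∀ i, GorensteinWeakInjective R (G i)

/-- The Gorenstein weak injective dimension, as an element of `ℕ∞`. -/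
def Gwid (M : ModuleCat.{u} R) : ℕ∞ :=
  sInf {c : ℕ∞ | ∃ n : ℕ, c = n ∧ GwidLE R M n}

/-- `Gid_R M ≤ n`, via coresolutions by Gorenstein injective modules. -/
def GidLE (M : ModuleCat.{u} R) (n : ℕ) : Prop :=
  ∃ (G : ℕ → ModuleCat.{u} R) (d : ∀ i, G i →ₗ[R] G (i + 1)) (ε : M →ₗ[R] G 0),
    IsFiniteCoresolution R M n G d ε ∧ ∀ i, GorensteinInjective R (G i)

/-- The Gorenstein injective dimension, as an element of `ℕ∞`. -/
def Gid (M : ModuleCat.{u} R) : ℕ∞ :=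
  sInf {c : ℕ∞ | ∃ n : ℕ, c = n ∧ GidLE R M n}

/-- `id_R M ≤ n`, via coresolutions by injective modules. -/
def IdLE (M : ModuleCat.{u} R) (n : ℕ) : Prop :=
  ∃ (G : ℕ → ModuleCat.{u} R) (d : ∀ i, G i →ₗ[R] G (i + 1)) (ε : M →ₗ[R] G 0),
    IsFiniteCoresolution R M n G d ε ∧ ∀ i, Module.Injective R (G i)

/-- The injective dimension, as an element of `ℕ∞`. -/
def Idim (M : ModuleCat.{u} R) : ℕ∞ :=
  sInf {c : ℕ∞ | ∃ n : ℕ, c = n ∧ IdLE R M n}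

/-- The data of an exact sequence `0 → P_n → ⋯ → P_0 → M → 0`. -/
def IsFiniteResolution (M : ModuleCat.{u} R) (n : ℕ) (P : ℕ → ModuleCat.{u} R)
    (d : ∀ i, P (i + 1) →ₗ[R] P i) (ε : P 0 →ₗ[R] M) : Prop :=
  Function.Surjective ε ∧ Function.Exact (d 0) ε ∧
  (∀ i, Function.Exact (d (i + 1)) (d i)) ∧
  (∀ i, n < i → ∀ x : P i, x = 0)

/-- `pd_R M ≤ n`, via resolutions by projective modules. -/
def PdLE (M : ModuleCat.{u} R) (n : ℕ) : Prop :=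
  ∃ (P : ℕ → ModuleCat.{u} R) (d : ∀ i, P (i + 1) →ₗ[R] P i) (ε : P 0 →ₗ[R] M),
    IsFiniteResolution R M n P d ε ∧ ∀ i, Module.Projective R (P i)

end

variable (R : Type u) [Ring R]

/-- A short exact sequence `0 → L → M → N → 0` of `R`-modules. -/
def ShortExactSeq (L M N : ModuleCat.{u} R) (f : L →ₗ[R] M) (g : M →ₗ[R] N) : Prop :=
  Function.Injective f ∧ Function.Surjective g ∧ Function.Exact f g

/-- Exactness of `0 → Hom(C, X) → Hom(B, X) → Hom(A, X) → 0` induced by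
`0 → A → B → C → 0`. -/
def HomContraExact (X : ModuleCat.{u} R) {A B C : ModuleCat.{u} R}
    (f : A →ₗ[R] B) (g : B →ₗ[R] C) : Prop :=
  Function.Injective (fun h : C →ₗ[R] X => h.comp g) ∧
  Function.Exact (fun h : C →ₗ[R] X => h.comp g) (fun h : B →ₗ[R] X => h.comp f) ∧
  Function.Surjective (fun h : B →ₗ[R] X => h.comp f)

/-- A short exact sequence is `GWI`-copure exact if `Hom_R(-, X)` leaves it exact for
every Gorenstein weak injective module `X`. -/
def GWICopureExact {A B C : ModuleCat.{u} R} (f : A →ₗ[R] B) (g : B →ₗ[R] C) : Prop :=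
  ShortExactSeq R A B C f g ∧
  ∀ X : ModuleCat.{u} R, GorensteinWeakInjective R X → HomContraExact R X f g

/-- `M` is `GWI`-copure injective if `Hom_R(-, M)` is exact on every `GWI`-copure exact
sequence. -/
def GWICopureInjectiveMod (M : ModuleCat.{u} R) : Prop :=
  ∀ (A B C : ModuleCat.{u} R) (f : A →ₗ[R] B) (g : B →ₗ[R] C),
    GWICopureExact R f g → HomContraExact R M f g

/-- `φ : M → G` is a Gorenstein weak injective preenvelope of `M`. -/
def GWIPreenvelope (M G : ModuleCat.{u} R) (φ : M →ₗ[R] G) : Prop :=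
  GorensteinWeakInjective R G ∧
  ∀ G' : ModuleCat.{u} R, GorensteinWeakInjective R G' →
    ∀ f : M →ₗ[R] G', ∃ g : G →ₗ[R] G', g.comp φ = f

/-- A `WI`-pure Tate injective resolution of `M` : an injective resolution
`0 → M → E^0 → E^1 → ⋯`, a `WI`-pure exact complex `T` of injectives, and a chain map
`u : E → T` which is an isomorphism in all sufficiently large degrees. -/
def WIPureTateInjectiveResolution (M : ModuleCat.{u} R)
    (E : ℕ → ModuleCat.{u} R) (dE : ∀ n, E n →ₗ[R] E (n + 1)) (ε : M →ₗ[R] E 0)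
    (T : ℤ → ModuleCat.{u} R) (dT : ∀ n : ℤ, T n →ₗ[R] T (n + 1))
    (u : ∀ n : ℕ, E n →ₗ[R] T n) : Prop :=
  (∀ n, Module.Injective R (E n)) ∧ Function.Injective ε ∧
  Function.Exact ε (dE 0) ∧ (∀ n, Function.Exact (dE n) (dE (n + 1))) ∧
  IsTotallyAcyclicInjComplex R (WeakInjective R) T dT ∧
  (∀ n : ℕ, (dT n).comp (u n) = (u (n + 1)).comp (dE n)) ∧
  ∃ N : ℕ, ∀ n, N ≤ n → Function.Bijective (u n)

/-- Vanishing of the relative Tate cohomology `Êxt^i_GWI(N, M)` for all `i ∈ ℤ`,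
computed from the `WI`-pure exact complex `T` : the complex `Hom_R(N, T)` is exact. -/
def ExtHatVanishesAll (N : ModuleCat.{u} R) (T : ℤ → ModuleCat.{u} R)
    (dT : ∀ n : ℤ, T n →ₗ[R] T (n + 1)) : Prop :=
  ∀ n : ℤ, Function.Exact (fun g : N →ₗ[R] T n => (dT n).comp g)
    (fun g : N →ₗ[R] T (n + 1) => (dT (n + 1)).comp g)

/-! ### Ext groups -/

theorem extVanish_succ_iff (n : ℕ) (N M : ModuleCat.{u} R) :
    ExtVanish R (n + 1) N M ↔ Subsingleton (Abelian.Ext.{u} N M (n + 1)) := by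
  have P : ProjectiveResolution N := (HasProjectiveResolution.out (Z := N)).some
  have key : ExtVanish R (n + 1) N M ↔ ∀ f : P.complex.X (n + 1) ⟶ M,
      P.complex.d (n + 2) (n + 1) ≫ f = 0 → ∃ g : P.complex.X n ⟶ M,
        P.complex.d (n + 1) n ≫ g = f := by
    rw [ExtVanish, ← ModuleCat.isZero_iff_subsingleton, (P.isoExt (n + 1) M).isZero_iff,
      ← HomologicalComplex.exactAt_iff_isZero_homology,
      HomologicalComplex.exactAt_iff' _ n (n + 1) (n + 2) (by simp) (by simp),
      ShortComplex.moduleCat_exact_iff]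
    rfl
  rw [key]
  constructor
  · intro h
    refine subsingleton_of_forall_eq 0 fun α => ?_
    obtain ⟨f, hf, rfl⟩ := P.extMk_surjective α (n + 2) rfl
    exact (P.extMk_eq_zero_iff f (n + 2) rfl hf n rfl).2 (h f hf)
  · intro h f hf
    exact (P.extMk_eq_zero_iff f (n + 2) rfl hf n rfl).1 (Subsingleton.elim _ _)

variable {R}

theorem ShortExactSeq.comp_eq_zero {A B C : ModuleCat.{u} R} {f : A →ₗ[R] B} {g : B →ₗ[R] C}
    (h : ShortExactSeq R A B C f g) : g.comp f = 0 :=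
  h.2.2.linearMap_comp_eq_zero

theorem ShortExactSeq.shortExact {A B C : ModuleCat.{u} R} {f : A →ₗ[R] B} {g : B →ₗ[R] C}
    (h : ShortExactSeq R A B C f g) :
    (ModuleCat.shortComplexOfCompEqZero f g h.comp_eq_zero).ShortExact :=
  ModuleCat.shortComplex_shortExact _ h.2.2 h.1 h.2.1

section LongExact

variable {A B C : ModuleCat.{u} R} {f : A →ₗ[R] B} {g : B →ₗ[R] C}

theorem ShortExactSeq.ext_middle (h : ShortExactSeq R A B C f g) {W : ModuleCat.{u} R} {i : ℕ}
    (hA : Subsingleton (Abelian.Ext.{u} W A i)) (hC : Subsingleton (Abelian.Ext.{u} W C i)) :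
    Subsingleton (Abelian.Ext.{u} W B i) := by
  refine subsingleton_of_forall_eq 0 fun x => ?_
  obtain ⟨y, rfl⟩ := Abelian.Ext.covariant_sequence_exact₂ W h.shortExact x
    (hC.elim (α := Abelian.Ext.{u} W C i) _ _)
  rw [hA.elim (α := Abelian.Ext.{u} W A i) y 0, Abelian.Ext.zero_comp]

theorem ShortExactSeq.ext_right (h : ShortExactSeq R A B C f g) {W : ModuleCat.{u} R} {i : ℕ}
    (hA : Subsingleton (Abelian.Ext.{u} W A (i + 1)))
    (hB : Subsingleton (Abelian.Ext.{u} W B i)) :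
    Subsingleton (Abelian.Ext.{u} W C i) := by
  refine subsingleton_of_forall_eq 0 fun x => ?_
  obtain ⟨y, rfl⟩ := Abelian.Ext.covariant_sequence_exact₃ W h.shortExact x rfl
    (hA.elim (α := Abelian.Ext.{u} W A (i + 1)) _ _)
  rw [hB.elim (α := Abelian.Ext.{u} W B i) y 0, Abelian.Ext.zero_comp]

theorem ShortExactSeq.ext_left (h : ShortExactSeq R A B C f g) {W : ModuleCat.{u} R} {i : ℕ}
    (hC : Subsingleton (Abelian.Ext.{u} W C i))
    (hB : Subsingleton (Abelian.Ext.{u} W B (i + 1))) :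
    Subsingleton (Abelian.Ext.{u} W A (i + 1)) := by
  refine subsingleton_of_forall_eq 0 fun x => ?_
  obtain ⟨y, rfl⟩ := Abelian.Ext.covariant_sequence_exact₁ W h.shortExact x
    (hB.elim (α := Abelian.Ext.{u} W B (i + 1)) _ _) rfl
  rw [hC.elim (α := Abelian.Ext.{u} W C i) y 0, Abelian.Ext.zero_comp]

theorem ShortExactSeq.exists_lift (h : ShortExactSeq R A B C f g) {W : ModuleCat.{u} R}
    (hA : Subsingleton (Abelian.Ext.{u} W A 1)) (φ : W →ₗ[R] C) :
    ∃ ψ : W →ₗ[R] B, g.comp ψ = φ := by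
  obtain ⟨y, hy⟩ := Abelian.Ext.covariant_sequence_exact₃ W h.shortExact
    (Abelian.Ext.mk₀ (ModuleCat.ofHom φ)) (n₁ := 1) rfl
    (hA.elim (α := Abelian.Ext.{u} W A 1) _ _)
  obtain ⟨ψ, rfl⟩ := (Abelian.Ext.mk₀_bijective W B).2 y
  rw [Abelian.Ext.mk₀_comp_mk₀] at hy
  exact ⟨ψ.hom, congrArg ModuleCat.Hom.hom ((Abelian.Ext.mk₀_bijective W C).1 hy)⟩

theorem ShortExactSeq.ext_one_of_forall_lift (h : ShortExactSeq R A B C f g)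
    {W : ModuleCat.{u} R} (hB : Subsingleton (Abelian.Ext.{u} W B 1))
    (hφ : ∀ φ : W →ₗ[R] C, ∃ ψ : W →ₗ[R] B, g.comp ψ = φ) :
    Subsingleton (Abelian.Ext.{u} W A 1) := by
  refine subsingleton_of_forall_eq 0 fun x => ?_
  obtain ⟨y, rfl⟩ := Abelian.Ext.covariant_sequence_exact₁ W h.shortExact x
    (hB.elim (α := Abelian.Ext.{u} W B 1) _ _) (n₀ := 0) rfl
  obtain ⟨φ, rfl⟩ := (Abelian.Ext.mk₀_bijective W C).2 y
  obtain ⟨ψ, hψ⟩ := hφ φ.hom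
  have : φ = ModuleCat.ofHom ψ ≫
      (ModuleCat.shortComplexOfCompEqZero f g h.comp_eq_zero).g := by
    ext1
    exact hψ.symm
  rw [this, ← Abelian.Ext.mk₀_comp_mk₀_assoc, h.shortExact.comp_extClass, Abelian.Ext.comp_zero]

end LongExact

theorem ext_injective_subsingleton (W : ModuleCat.{u} R) {E : ModuleCat.{u} R}
    (hE : Module.Injective R E) (i : ℕ) : Subsingleton (Abelian.Ext.{u} W E (i + 1)) := by
  have : Injective E := Module.injective_object_of_injective_module R E
  exact subsingleton_of_forall_eq 0 Abelian.Ext.eq_zero_of_injective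

theorem weakInjective_of_injective {E : ModuleCat.{u} R} (hE : Module.Injective R E) :
    WeakInjective R E := fun N _ =>
  (extVanish_succ_iff R 0 N E).2 (ext_injective_subsingleton N hE 0)

/-! ### A coinductive description of Gorenstein weak injective modules -/

/-- `Ext^i_R(W, M) = 0` for every weak injective module `W` and every `i ≥ 1`. -/
def WeakInjectivePerp (M : ModuleCat.{u} R) : Prop :=
  ∀ W : ModuleCat.{u} R, WeakInjective R W → ∀ i : ℕ,
    Subsingleton (Abelian.Ext.{u} W M (i + 1))

/-- There is a short exact sequence `0 → K → I → X → 0` with `I` injective. -/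
def InjectiveLink (K X : ModuleCat.{u} R) : Prop :=
  ∃ (I : ModuleCat.{u} R) (ι : K →ₗ[R] I) (π : I →ₗ[R] X),
    Module.Injective R I ∧ ShortExactSeq R K I X ι π

theorem weakInjectivePerp_of_injective {E : ModuleCat.{u} R} (hE : Module.Injective R E) :
    WeakInjectivePerp E := fun W _ i => ext_injective_subsingleton W hE i

theorem ShortExactSeq.perp_middle {A B C : ModuleCat.{u} R} {f : A →ₗ[R] B} {g : B →ₗ[R] C}
    (h : ShortExactSeq R A B C f g) (hA : WeakInjectivePerp A) (hC : WeakInjectivePerp C) :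
    WeakInjectivePerp B := fun W hW i => h.ext_middle (hA W hW i) (hC W hW i)

theorem ShortExactSeq.perp_right {A B C : ModuleCat.{u} R} {f : A →ₗ[R] B} {g : B →ₗ[R] C}
    (h : ShortExactSeq R A B C f g) (hA : WeakInjectivePerp A) (hB : WeakInjectivePerp B) :
    WeakInjectivePerp C := fun W hW i => h.ext_right (hA W hW (i + 1)) (hB W hW i)

theorem exists_injective_embedding (X : ModuleCat.{u} R) :
    ∃ (I C : ModuleCat.{u} R) (ι : X →ₗ[R] I) (π : I →ₗ[R] C),
      Module.Injective R I ∧ ShortExactSeq R X I C ι π := by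
  let ι : X →ₗ[R] (Injective.under X : ModuleCat.{u} R) := (Injective.ι X).hom
  have : Injective (ModuleCat.of R (Injective.under X : ModuleCat.{u} R)) :=
    inferInstanceAs (Injective (Injective.under X))
  refine ⟨Injective.under X, ModuleCat.of R (_ ⧸ LinearMap.range ι), ι,
    (LinearMap.range ι).mkQ, Module.injective_module_of_injective_object R _,
    (ModuleCat.mono_iff_injective (Injective.ι X)).1 inferInstance,
    Submodule.mkQ_surjective _, LinearMap.exact_map_mkQ_range ι⟩

/-- A relation that can be followed backwards from `p` and forwards from `q` has a doubly
infinite chain through every element satisfying both. -/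
theorem exists_int_chain {α : Type*} (r : α → α → Prop) (p q : α → Prop)
    (hp : ∀ x, p x → ∃ y, p y ∧ r y x) (hq : ∀ x, q x → ∃ y, q y ∧ r x y)
    (hpq : ∀ x, p x → q x) (x : α) (hx : p x) :
    ∃ Z : ℤ → α, Z 1 = x ∧ ∀ n, q (Z n) ∧ r (Z n) (Z (n + 1)) := by
  choose l hlp hlr using hp
  choose s hsq hsr using hq
  let a : ℕ → {y // p y} := fun n => Nat.rec ⟨x, hx⟩ (fun _ y => ⟨l y.1 y.2, hlp y.1 y.2⟩) n
  let b : ℕ → {y // q y} :=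
    fun n => Nat.rec ⟨x, hpq x hx⟩ (fun _ y => ⟨s y.1 y.2, hsq y.1 y.2⟩) n
  let Z : ℤ → α := fun n => match n with
    | Int.ofNat m => (b m).1
    | Int.negSucc m => (a (m + 1)).1
  have hZ : ∀ n, q (Z n) ∧ r (Z n) (Z (n + 1)) := by
    intro n
    match n with
    | Int.ofNat m => exact ⟨(b m).2, hsr (b m).1 (b m).2⟩
    | Int.negSucc 0 => exact ⟨hpq _ (a 1).2, hlr (a 0).1 (a 0).2⟩
    | Int.negSucc (m + 1) => exact ⟨hpq _ (a (m + 2)).2, hlr (a (m + 1)).1 (a (m + 1)).2⟩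
  refine ⟨fun n => Z (n - 1), rfl, fun n => ⟨(hZ _).1, ?_⟩⟩
  have := (hZ (n - 1)).2
  rwa [show n - 1 + 1 = n + 1 - 1 by ring] at this

theorem gorensteinWeakInjective_of_class (𝒳 : ModuleCat.{u} R → Prop)
    (h : ∀ X, 𝒳 X → WeakInjectivePerp X ∧ ∃ K, 𝒳 K ∧ InjectiveLink K X)
    {M : ModuleCat.{u} R} (hM : 𝒳 M) : GorensteinWeakInjective R M := by
  obtain ⟨Z, rfl, hZ⟩ := exists_int_chain InjectiveLink 𝒳 WeakInjectivePerp
    (fun X hX => (h X hX).2)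
    (fun X hX => by
      obtain ⟨I, C, ι, π, hI, hs⟩ := exists_injective_embedding X
      exact ⟨C, hs.perp_right hX (weakInjectivePerp_of_injective hI), I, ι, π, hI, hs⟩)
    (fun X hX => (h X hX).1) M hM
  have hperp n := (hZ n).1
  choose I ι π hI hs using fun n => (hZ n).2
  have hexact : ∀ n, Function.Exact ((ι (n + 1)).comp (π n)) (π (n + 1)) := by
    intro n y
    rw [(hs (n + 1)).2.2 y, LinearMap.coe_comp, Set.range_comp, (hs n).2.1.range_eq,
      Set.image_univ]
  refine ⟨I, fun n => (ι (n + 1)).comp (π n), π 0, ⟨hI, fun n y => ?_, fun W hW n g => ?_⟩,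
    (hs 0).2.1, hexact (-1)⟩
  · rw [← hexact n y, LinearMap.comp_apply, map_eq_zero_iff _ (hs (n + 1 + 1)).1]
  · constructor
    · intro hg
      have hg0 : (π (n + 1)).comp g = 0 := by
        ext w
        exact (hs (n + 1 + 1)).1 (by simpa using LinearMap.congr_fun hg w)
      have hinj := (hs (n + 1)).1
      have hmem : ∀ w, g w ∈ LinearMap.range (ι (n + 1)) := fun w =>
        ((hs (n + 1)).2.2 _).1 (LinearMap.congr_fun hg0 w)
      let e := LinearEquiv.ofInjective (ι (n + 1)) hinj
      obtain ⟨ψ, hψ⟩ := (hs n).exists_lift (hperp n W hW 0)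
        (e.symm.toLinearMap.comp (g.codRestrict _ hmem))
      refine ⟨ψ, ?_⟩
      ext w
      have h1 := congrArg e (LinearMap.congr_fun hψ w)
      have h2 := congrArg Subtype.val h1
      simpa [e] using h2
    · rintro ⟨g, rfl⟩
      ext w
      have : π (n + 1) (ι (n + 1) (π n (g w))) = 0 :=
        LinearMap.congr_fun (hs (n + 1)).comp_eq_zero _
      simp [this]

section Complex

variable {I : ℤ → ModuleCat.{u} R} {d : ∀ n : ℤ, I n →ₗ[R] I (n + 1)}

theorem exists_shortExactSeq_of_kernels {A B C : ModuleCat.{u} R} {f : A →ₗ[R] B}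
    {g : B →ₗ[R] C} (hfg : Function.Exact f g) {K X : ModuleCat.{u} R} {j : K →ₗ[R] A}
    (hj : Function.Injective j) (hjf : Function.Exact j f) {ι : X →ₗ[R] B}
    (hι : Function.Injective ι) (hιg : Function.Exact ι g) :
    ∃ π : A →ₗ[R] X, ShortExactSeq R K A X j π ∧ ι.comp π = f := by
  let e := LinearEquiv.ofInjective ι hι
  have hmem : ∀ a, f a ∈ LinearMap.range ι := fun a => (hιg _).1 ((hfg _).2 ⟨a, rfl⟩)
  let π : A →ₗ[R] X := e.symm.toLinearMap.comp (f.codRestrict _ hmem)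
  have hπ : ∀ a, ι (π a) = f a := fun a =>
    congrArg Subtype.val (e.apply_symm_apply (f.codRestrict _ hmem a))
  refine ⟨π, ⟨hj, fun x => ?_, fun a => ?_⟩, LinearMap.ext hπ⟩
  · obtain ⟨a, ha⟩ := (hfg _).1 ((hιg _).2 ⟨x, rfl⟩)
    exact ⟨a, hι ((hπ a).trans ha)⟩
  · rw [← hjf a, ← hπ, map_eq_zero_iff _ hι]

theorem IsTotallyAcyclicInjComplex.perp_kernel
    (h : IsTotallyAcyclicInjComplex R (WeakInjective R) I d) (n : ℤ) {K : ModuleCat.{u} R}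
    {j : K →ₗ[R] I n} (hj : Function.Injective j) (hjd : Function.Exact j (d n)) :
    WeakInjectivePerp K := by
  intro W hW i
  induction i generalizing n K j with
  | zero =>
    obtain ⟨π, hs, hπ⟩ := exists_shortExactSeq_of_kernels (h.2.1 n) hj hjd
      (X := ModuleCat.of R (LinearMap.ker (d (n + 1)))) (Submodule.injective_subtype _)
      (LinearMap.exact_subtype_ker_map _)
    refine hs.ext_one_of_forall_lift (ext_injective_subsingleton W (h.1 n) 0) fun φ => ?_
    obtain ⟨ψ, hψ⟩ := (h.2.2 W hW n ((Submodule.subtype _).comp φ)).1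
      (by ext w; exact (φ w).2)
    refine ⟨ψ, ?_⟩
    ext w
    exact (LinearMap.congr_fun hπ (ψ w)).trans (LinearMap.congr_fun hψ w)
  | succ i ih =>
    obtain ⟨π, hs, hπ⟩ := exists_shortExactSeq_of_kernels (h.2.1 n) hj hjd
      (X := ModuleCat.of R (LinearMap.ker (d (n + 1)))) (Submodule.injective_subtype _)
      (LinearMap.exact_subtype_ker_map _)
    exact hs.ext_left (ih (n + 1) (Submodule.injective_subtype _)
      (LinearMap.exact_subtype_ker_map _)) (ext_injective_subsingleton W (h.1 n) _)

end Complex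

theorem GorensteinWeakInjective.exists_class {M : ModuleCat.{u} R}
    (hM : GorensteinWeakInjective R M) :
    ∃ 𝒳 : ModuleCat.{u} R → Prop,
      (∀ X, 𝒳 X → WeakInjectivePerp X ∧ ∃ K, 𝒳 K ∧ InjectiveLink K X) ∧ 𝒳 M := by
  obtain ⟨I, d, π, h, hπ, hd⟩ := hM
  refine ⟨fun X => ∃ (n : ℤ) (j : X →ₗ[R] I n),
    Function.Injective j ∧ Function.Exact j (d n), ?_, ?_⟩
  · rintro X ⟨n, j, hj, hjd⟩
    refine ⟨h.perp_kernel n hj hjd, ?_⟩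
    obtain ⟨m, rfl⟩ : ∃ m, n = m + 1 := ⟨n - 1, by ring⟩
    obtain ⟨p, hs, -⟩ := exists_shortExactSeq_of_kernels (h.2.1 m)
      (K := ModuleCat.of R (LinearMap.ker (d m))) (Submodule.injective_subtype _)
      (LinearMap.exact_subtype_ker_map _) hj hjd
    exact ⟨_, ⟨m, _, Submodule.injective_subtype _, LinearMap.exact_subtype_ker_map _⟩,
      I m, _, p, h.1 m, hs⟩
  · have hker : LinearMap.ker π = LinearMap.ker (d 0) := by
      ext x
      have hd' : Function.Exact (d (-1)) (d 0) := h.2.1 (-1)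
      exact (hd x).trans (hd' x).symm
    obtain ⟨j, hj⟩ : ∃ j : M →ₗ[R] I (0 + 1), j.comp π = d 0 := by
      refine ⟨((LinearMap.ker π).liftQ (d 0) hker.le).comp
        (π.quotKerEquivOfSurjective hπ).symm.toLinearMap, ?_⟩
      ext x
      have : (π.quotKerEquivOfSurjective hπ).symm (π x) = (LinearMap.ker π).mkQ x := by
        rw [LinearEquiv.symm_apply_eq]
        rfl
      simp [this]
    have hj' : ∀ x, j (π x) = d 0 x := LinearMap.congr_fun hj
    refine ⟨0 + 1, j, ?_, fun y => ?_⟩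
    · rw [injective_iff_map_eq_zero]
      intro m hm
      obtain ⟨x, rfl⟩ := hπ m
      rw [hj'] at hm
      exact hker.ge hm
    · rw [h.2.1 0 y]
      constructor
      · rintro ⟨x, rfl⟩
        exact ⟨π x, hj' x⟩
      · rintro ⟨m, rfl⟩
        obtain ⟨x, rfl⟩ := hπ m
        exact ⟨x, (hj' x).symm⟩

/-! ### Closure properties of Gorenstein weak injective modules -/

theorem GorensteinWeakInjective.perp {M : ModuleCat.{u} R}
    (hM : GorensteinWeakInjective R M) : WeakInjectivePerp M := by
  obtain ⟨𝒳, h, hM⟩ := hM.exists_class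
  exact (h M hM).1

theorem GorensteinWeakInjective.exists_link {M : ModuleCat.{u} R}
    (hM : GorensteinWeakInjective R M) :
    ∃ K, GorensteinWeakInjective R K ∧ InjectiveLink K M := by
  obtain ⟨𝒳, h, hM⟩ := hM.exists_class
  obtain ⟨K, hK, hl⟩ := (h M hM).2
  exact ⟨K, gorensteinWeakInjective_of_class 𝒳 h hK, hl⟩

theorem gorensteinWeakInjective_of_link {K M : ModuleCat.{u} R}
    (hM : WeakInjectivePerp M) (hK : GorensteinWeakInjective R K) (hl : InjectiveLink K M) :
    GorensteinWeakInjective R M := by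
  refine gorensteinWeakInjective_of_class (fun X => GorensteinWeakInjective R X ∨ X = M)
    ?_ (Or.inr rfl)
  rintro X (hX | rfl)
  · obtain ⟨L, hL, h⟩ := hX.exists_link
    exact ⟨hX.perp, L, Or.inl hL, h⟩
  · exact ⟨hM, K, Or.inl hK, hl⟩

theorem shortExactSeq_id_zero (E : ModuleCat.{u} R) {Z : ModuleCat.{u} R} (hZ : ∀ z : Z, z = 0) :
    ShortExactSeq R Z E E 0 LinearMap.id :=
  ⟨fun x _ _ => (hZ x).trans (hZ _).symm, Function.surjective_id, fun _ =>
    ⟨fun h => ⟨0, h.symm⟩, fun ⟨_, h⟩ => h.symm⟩⟩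

theorem injective_of_forall_eq_zero {Z : ModuleCat.{u} R} (hZ : ∀ z : Z, z = 0) :
    Module.Injective R Z :=
  ⟨fun _ _ _ _ _ _ _ _ g => ⟨0, fun x => (hZ (g x)).symm⟩⟩

theorem gorensteinWeakInjective_of_injective {E : ModuleCat.{u} R}
    (hE : Module.Injective R E) : GorensteinWeakInjective R E := by
  refine gorensteinWeakInjective_of_class (fun X => Module.Injective R X)
    (fun X hX => ⟨weakInjectivePerp_of_injective hX, ModuleCat.of R PUnit, ?_, X, 0, LinearMap.id,
      hX, shortExactSeq_id_zero X fun _ => rfl⟩) hE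
  exact injective_of_forall_eq_zero fun _ => rfl

theorem gorensteinWeakInjective_of_forall_eq_zero {Z : ModuleCat.{u} R} (hZ : ∀ z : Z, z = 0) :
    GorensteinWeakInjective R Z :=
  gorensteinWeakInjective_of_injective (injective_of_forall_eq_zero hZ)

theorem GorensteinWeakInjective.of_bijective {M N : ModuleCat.{u} R}
    (hM : GorensteinWeakInjective R M) (e : M →ₗ[R] N) (he : Function.Bijective e) :
    GorensteinWeakInjective R N := by
  obtain ⟨I, d, π, h, hπ, hd⟩ := hM
  refine ⟨I, d, e.comp π, h, he.2.comp hπ, fun x => ?_⟩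
  rw [LinearMap.comp_apply, map_eq_zero_iff _ he.1]
  exact hd x

/-- Factor a map through the kernel of a map of a short exact sequence. -/
theorem ShortExactSeq.exists_factor {A B C W : ModuleCat.{u} R} {f : A →ₗ[R] B} {g : B →ₗ[R] C}
    (h : ShortExactSeq R A B C f g) (φ : W →ₗ[R] B) (hφ : ∀ w, g (φ w) = 0) :
    ∃ ψ : W →ₗ[R] A, ∀ w, f (ψ w) = φ w := by
  let e := LinearEquiv.ofInjective f h.1
  have hmem : ∀ w, φ w ∈ LinearMap.range f := fun w => (h.2.2 _).1 (hφ w)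
  exact ⟨e.symm.toLinearMap.comp (φ.codRestrict _ hmem),
    fun w => congrArg Subtype.val (e.apply_symm_apply (φ.codRestrict _ hmem w))⟩

/-- Factor a map through the cokernel of a map of a short exact sequence. -/
theorem ShortExactSeq.exists_desc {A B C W : ModuleCat.{u} R} {f : A →ₗ[R] B} {g : B →ₗ[R] C}
    (h : ShortExactSeq R A B C f g) (φ : B →ₗ[R] W) (hφ : ∀ a, φ (f a) = 0) :
    ∃ ψ : C →ₗ[R] W, ∀ b, ψ (g b) = φ b := by
  have hle : LinearMap.ker g ≤ LinearMap.ker φ := by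
    intro b hb
    obtain ⟨a, rfl⟩ := (h.2.2 b).1 hb
    exact hφ a
  refine ⟨((LinearMap.ker g).liftQ φ hle).comp
    (g.quotKerEquivOfSurjective h.2.1).symm.toLinearMap, fun b => ?_⟩
  have : (g.quotKerEquivOfSurjective h.2.1).symm (g b) = (LinearMap.ker g).mkQ b := by
    rw [LinearEquiv.symm_apply_eq]
    rfl
  simp [this]

/-- For `0 → A → B → C → 0` and an epimorphism `J → B` with kernel `K`, the kernel `L` of
`J → C` is an extension of `A` by `K`. -/
theorem ShortExactSeq.exists_kernel_comp {A B C J K : ModuleCat.{u} R} {f : A →ₗ[R] B}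
    {g : B →ₗ[R] C} (h : ShortExactSeq R A B C f g) {k : K →ₗ[R] J} {π : J →ₗ[R] B}
    (hπ : ShortExactSeq R K J B k π) :
    ∃ (L : ModuleCat.{u} R) (l : L →ₗ[R] J) (i : K →ₗ[R] L) (p : L →ₗ[R] A),
      ShortExactSeq R L J C l (g.comp π) ∧ ShortExactSeq R K L A i p := by
  have hL : ShortExactSeq R (ModuleCat.of R (LinearMap.ker (g.comp π))) J C
      (Submodule.subtype _) (g.comp π) :=
    ⟨Submodule.injective_subtype _, h.2.1.comp hπ.2.1, LinearMap.exact_subtype_ker_map _⟩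
  obtain ⟨i, hi⟩ := hL.exists_factor k fun x => by
    simp [show π (k x) = 0 from (hπ.2.2 _).2 ⟨x, rfl⟩]
  obtain ⟨p, hp⟩ := h.exists_factor (π.comp (Submodule.subtype (LinearMap.ker (g.comp π))))
    (W := ModuleCat.of R (LinearMap.ker (g.comp π))) fun w => w.2
  refine ⟨_, _, i, p, hL, fun x y hxy => hπ.1 ?_, fun a => ?_, fun x => ?_⟩
  · rw [← hi, ← hi, hxy]
  · obtain ⟨x, hx⟩ := hπ.2.1 (f a)
    refine ⟨⟨x, ?_⟩, h.1 ((hp _).trans hx)⟩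
    simp [hx, show g (f a) = 0 from (h.2.2 _).2 ⟨a, rfl⟩]
  · rw [← map_eq_zero_iff _ h.1, hp]
    constructor
    · intro hx
      obtain ⟨y, hy⟩ := (hπ.2.2 _).1 hx
      exact ⟨y, hL.1 ((hi y).trans hy)⟩
    · rintro ⟨y, rfl⟩
      exact (congrArg π (hi y)).trans ((hπ.2.2 _).2 ⟨y, rfl⟩)

theorem injective_prod {I J : ModuleCat.{u} R} (hI : Module.Injective R I)
    (hJ : Module.Injective R J) : Module.Injective R (ModuleCat.of R (I × J)) :=
  ⟨fun X Y _ _ _ _ f hf g => by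
    obtain ⟨a, ha⟩ := hI.out f hf ((LinearMap.fst R I J).comp g)
    obtain ⟨b, hb⟩ := hJ.out f hf ((LinearMap.snd R I J).comp g)
    exact ⟨a.prod b, fun x => Prod.ext (ha x) (hb x)⟩⟩

theorem injective_of_retract {I L : ModuleCat.{u} R} (hI : Module.Injective R I)
    (i : L →ₗ[R] I) (r : I →ₗ[R] L) (hr : ∀ x, r (i x) = x) : Module.Injective R L :=
  ⟨fun X Y _ _ _ _ f hf g => by
    obtain ⟨a, ha⟩ := hI.out f hf (i.comp g)
    exact ⟨r.comp a, fun x => by simp [ha, hr]⟩⟩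

theorem ShortExactSeq.injective_left {L J I : ModuleCat.{u} R} {l : L →ₗ[R] J} {g : J →ₗ[R] I}
    (h : ShortExactSeq R L J I l g) (hL : WeakInjectivePerp L) (hJ : Module.Injective R J)
    (hI : Module.Injective R I) : Module.Injective R L := by
  obtain ⟨s, hs⟩ := h.exists_lift (hL I (weakInjective_of_injective hI) 0) LinearMap.id
  have hs' : ∀ x, g (s x) = x := LinearMap.congr_fun hs
  obtain ⟨r, hr⟩ := h.exists_factor (LinearMap.id - s.comp g) fun w => by simp [hs']
  refine injective_of_retract hJ l r fun x => h.1 ?_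
  simp [hr, show g (l x) = 0 from (h.2.2 _).2 ⟨x, rfl⟩]

/-- The horseshoe lemma, for a lift `s` of `b` through `g`. -/
theorem ShortExactSeq.horseshoe {A X B K I L J : ModuleCat.{u} R} {f : A →ₗ[R] X}
    {g : X →ₗ[R] B} (h : ShortExactSeq R A X B f g) {k : K →ₗ[R] I} {a : I →ₗ[R] A}
    (ha : ShortExactSeq R K I A k a) {l : L →ₗ[R] J} {b : J →ₗ[R] B}
    (hb : ShortExactSeq R L J B l b) (s : J →ₗ[R] X) (hs : g.comp s = b) :
    ∃ (Y : ModuleCat.{u} R) (y : Y →ₗ[R] ModuleCat.of R (I × J))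
      (x : ModuleCat.of R (I × J) →ₗ[R] X) (m : K →ₗ[R] Y) (e : Y →ₗ[R] L),
      ShortExactSeq R Y (ModuleCat.of R (I × J)) X y x ∧ ShortExactSeq R K Y L m e := by
  have hs' : ∀ z, g (s z) = b z := LinearMap.congr_fun hs
  have hgf : ∀ z, g (f z) = 0 := fun z => (h.2.2 _).2 ⟨z, rfl⟩
  let x : I × J →ₗ[R] X := (f.comp a).coprod s
  have hx : ∀ u v, x (u, v) = f (a u) + s v := fun u v => rfl
  have hgx : ∀ w, g (x w) = b w.2 := fun ⟨u, v⟩ => by simp [hx, hgf, hs']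
  have hY : ShortExactSeq R (ModuleCat.of R (LinearMap.ker x)) (ModuleCat.of R (I × J)) X
      (Submodule.subtype _) x := by
    refine ⟨Submodule.injective_subtype _, fun z => ?_, LinearMap.exact_subtype_ker_map _⟩
    obtain ⟨v, hv⟩ := hb.2.1 (g z)
    obtain ⟨w, hw⟩ := (h.2.2 (z - s v)).1 (by simp [hs', hv])
    obtain ⟨u, rfl⟩ := ha.2.1 w
    exact ⟨(u, v), by rw [hx, hw, sub_add_cancel]⟩
  obtain ⟨m, hm⟩ := hY.exists_factor ((LinearMap.inl R I J).comp k) fun w => by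
    change x (k w, 0) = 0
    simp [hx, show a (k w) = 0 from (ha.2.2 _).2 ⟨w, rfl⟩]
  obtain ⟨e, he⟩ := hb.exists_factor (W := ModuleCat.of R (LinearMap.ker x))
    ((LinearMap.snd R I J).comp (Submodule.subtype _)) fun w => by
      change b w.1.2 = 0
      rw [← hgx, show x w.1 = 0 from w.2, map_zero]
  refine ⟨_, _, x, m, e, hY, fun w w' hw => ha.1 ?_, fun v => ?_, fun w => ?_⟩
  · have := (hm w).symm.trans ((congrArg _ hw).trans (hm w'))
    exact congrArg Prod.fst this
  · obtain ⟨t, ht⟩ := (h.2.2 (s (l v))).1 (by rw [hs']; exact (hb.2.2 _).2 ⟨v, rfl⟩)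
    obtain ⟨u, rfl⟩ := ha.2.1 t
    exact ⟨⟨(-u, l v), by simp [hx, ht]⟩, hb.1 (he _)⟩
  · rw [← map_eq_zero_iff _ hb.1, he]
    constructor
    · intro hw
      have hw2 : w.1.2 = 0 := hw
      have h0 : f (a w.1.1) = 0 := by
        have h1 : x (w.1.1, w.1.2) = 0 := w.2
        rwa [hx, hw2, map_zero, add_zero] at h1
      obtain ⟨v, hv⟩ := (ha.2.2 w.1.1).1 (h.1 (h0.trans (map_zero f).symm))
      exact ⟨v, hY.1 ((hm v).trans (Prod.ext hv hw2.symm))⟩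
    · rintro ⟨v, rfl⟩
      exact congrArg Prod.snd (hm v)

section Closure

variable {A B C : ModuleCat.{u} R} {f : A →ₗ[R] B} {g : B →ₗ[R] C}

theorem ShortExactSeq.gorensteinWeakInjective_middle (h : ShortExactSeq R A B C f g)
    (hA : GorensteinWeakInjective R A) (hC : GorensteinWeakInjective R C) :
    GorensteinWeakInjective R B := by
  refine gorensteinWeakInjective_of_class (fun X => ∃ (A C : ModuleCat.{u} R) (f : A →ₗ[R] X)
    (g : X →ₗ[R] C), ShortExactSeq R A X C f g ∧ GorensteinWeakInjective R A ∧
      GorensteinWeakInjective R C) ?_ ⟨A, C, f, g, h, hA, hC⟩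
  rintro X ⟨A, C, f, g, h, hA, hC⟩
  refine ⟨h.perp_middle hA.perp hC.perp, ?_⟩
  obtain ⟨K, hK, I, k, a, hI, ha⟩ := hA.exists_link
  obtain ⟨L, hL, J, l, b, hJ, hb⟩ := hC.exists_link
  obtain ⟨s, hs⟩ := h.exists_lift (hA.perp J (weakInjective_of_injective hJ) 0) b
  obtain ⟨Y, y, x, m, e, hY, hm⟩ := h.horseshoe ha hb s hs
  exact ⟨Y, ⟨K, L, m, e, hm, hK, hL⟩, _, y, x, injective_prod hI hJ, hY⟩

theorem ShortExactSeq.gorensteinWeakInjective_right (h : ShortExactSeq R A B C f g)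
    (hA : GorensteinWeakInjective R A) (hB : GorensteinWeakInjective R B) :
    GorensteinWeakInjective R C := by
  obtain ⟨K, hK, J, k, π, hJ, hπ⟩ := hB.exists_link
  obtain ⟨L, l, i, p, hL, hi⟩ := h.exists_kernel_comp hπ
  exact gorensteinWeakInjective_of_link (h.perp_right hA.perp hB.perp)
    (hi.gorensteinWeakInjective_middle hK hA) ⟨J, l, _, hJ, hL⟩

theorem ShortExactSeq.gorensteinWeakInjective_left_of_injective (h : ShortExactSeq R A B C f g)
    (hA : WeakInjectivePerp A) (hB : GorensteinWeakInjective R B)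
    (hC : Module.Injective R C) : GorensteinWeakInjective R A := by
  obtain ⟨K, hK, J, k, π, hJ, hπ⟩ := hB.exists_link
  obtain ⟨L, l, i, p, hL, hi⟩ := h.exists_kernel_comp hπ
  exact gorensteinWeakInjective_of_link hA hK
    ⟨L, i, p, hL.injective_left (hi.perp_middle hK.perp hA) hJ hC, hi⟩

/-- The pullback of a short exact sequence along a map with kernel `K`. -/
theorem ShortExactSeq.exists_pullback (h : ShortExactSeq R A B C f g) {K I : ModuleCat.{u} R}
    {k : K →ₗ[R] I} {π : I →ₗ[R] C} (hπ : ShortExactSeq R K I C k π) :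
    ∃ (P : ModuleCat.{u} R) (k' : K →ₗ[R] P) (π' : P →ₗ[R] B) (f' : A →ₗ[R] P)
      (g' : P →ₗ[R] I), ShortExactSeq R K P B k' π' ∧ ShortExactSeq R A P I f' g' := by
  let φ : B × I →ₗ[R] C := g.coprod (-π)
  have hφ : ∀ b i, φ (b, i) = g b - π i := fun b i => by simp [φ, sub_eq_add_neg]
  have hgf : ∀ z, g (f z) = 0 := fun z => (h.2.2 _).2 ⟨z, rfl⟩
  have hπk : ∀ z, π (k z) = 0 := fun z => (hπ.2.2 _).2 ⟨z, rfl⟩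
  have hmem : ∀ w : LinearMap.ker φ, g w.1.1 = π w.1.2 := fun w => by
    have : φ (w.1.1, w.1.2) = 0 := w.2
    rwa [hφ, sub_eq_zero] at this
  refine ⟨ModuleCat.of R (LinearMap.ker φ),
    ((LinearMap.inr R B I).comp k).codRestrict _ fun z => ?_,
    (LinearMap.fst R B I).comp (Submodule.subtype _),
    ((LinearMap.inl R B I).comp f).codRestrict _ fun z => ?_,
    (LinearMap.snd R B I).comp (Submodule.subtype _),
    ⟨fun z z' hz => hπ.1 ?_, fun b => ?_, fun w => ⟨fun hw => ?_, ?_⟩⟩,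
    ⟨fun z z' hz => h.1 ?_, fun i => ?_, fun w => ⟨fun hw => ?_, ?_⟩⟩⟩
  · exact (hφ _ _).trans (by simp [hπk])
  · exact (hφ _ _).trans (by simp [hgf])
  · exact congrArg (fun w : LinearMap.ker φ => w.1.2) hz
  · obtain ⟨i, hi⟩ := hπ.2.1 (g b)
    exact ⟨⟨(b, i), (hφ _ _).trans (by simp [hi])⟩, rfl⟩
  · have hw1 : w.1.1 = 0 := hw
    obtain ⟨z, hz⟩ := (hπ.2.2 w.1.2).1 (by rw [← hmem, hw1, map_zero])
    exact ⟨z, Subtype.ext (Prod.ext hw1.symm hz)⟩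
  · rintro ⟨z, rfl⟩
    rfl
  · exact congrArg (fun w : LinearMap.ker φ => w.1.1) hz
  · obtain ⟨b, hb⟩ := h.2.1 (π i)
    exact ⟨⟨(b, i), (hφ _ _).trans (by simp [hb])⟩, rfl⟩
  · have hw2 : w.1.2 = 0 := hw
    obtain ⟨z, hz⟩ := (h.2.2 w.1.1).1 (by rw [hmem, hw2, map_zero])
    exact ⟨z, Subtype.ext (Prod.ext hz hw2.symm)⟩
  · rintro ⟨z, rfl⟩
    rfl

theorem ShortExactSeq.gorensteinWeakInjective_left (h : ShortExactSeq R A B C f g)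
    (hA : WeakInjectivePerp A) (hB : GorensteinWeakInjective R B)
    (hC : GorensteinWeakInjective R C) : GorensteinWeakInjective R A := by
  obtain ⟨K, hK, I, k, π, hI, hπ⟩ := hC.exists_link
  obtain ⟨P, k', π', f', g', hk, hf⟩ := h.exists_pullback hπ
  exact hf.gorensteinWeakInjective_left_of_injective hA
    (hk.gorensteinWeakInjective_middle hK hB) hI

end Closure

/-! ### Modules of finite Gorenstein weak injective dimension -/

/-- Gorenstein weak injective dimension at most `n`, by recursion on short exact sequences. -/
def GwidLERec : ℕ → ModuleCat.{u} R → Prop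
  | 0, M => GorensteinWeakInjective R M
  | n + 1, M => ∃ (G M' : ModuleCat.{u} R) (f : M →ₗ[R] G) (g : G →ₗ[R] M'),
      ShortExactSeq R M G M' f g ∧ GorensteinWeakInjective R G ∧ GwidLERec n M'

theorem IsFiniteCoresolution.bijective {M : ModuleCat.{u} R} {G : ℕ → ModuleCat.{u} R}
    {d : ∀ i, G i →ₗ[R] G (i + 1)} {ε : M →ₗ[R] G 0} (h : IsFiniteCoresolution R M 0 G d ε) :
    Function.Bijective ε :=
  ⟨h.1, fun x => (h.2.1 x).1 (h.2.2.2 1 one_pos _)⟩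

theorem IsFiniteCoresolution.tail {M : ModuleCat.{u} R} {n : ℕ} {G : ℕ → ModuleCat.{u} R}
    {d : ∀ i, G i →ₗ[R] G (i + 1)} {ε : M →ₗ[R] G 0}
    (h : IsFiniteCoresolution R M (n + 1) G d ε) :
    ∃ (M' : ModuleCat.{u} R) (g : G 0 →ₗ[R] M') (ε' : M' →ₗ[R] G 1),
      ShortExactSeq R M (G 0) M' ε g ∧
      IsFiniteCoresolution R M' n (fun i => G (i + 1)) (fun i => d (i + 1)) ε' := by
  obtain ⟨g, hg, -⟩ := exists_shortExactSeq_of_kernels (h.2.2.1 0) h.1 h.2.1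
    (X := ModuleCat.of R (LinearMap.ker (d 1))) (Submodule.injective_subtype _)
    (LinearMap.exact_subtype_ker_map _)
  exact ⟨_, g, Submodule.subtype _, hg, Submodule.injective_subtype _,
    LinearMap.exact_subtype_ker_map _, fun i => h.2.2.1 (i + 1),
    fun i hi => h.2.2.2 (i + 1) (by lia)⟩

theorem exists_isFiniteCoresolution_zero (M : ModuleCat.{u} R) :
    ∃ (G : ℕ → ModuleCat.{u} R) (d : ∀ i, G i →ₗ[R] G (i + 1)) (ε : M →ₗ[R] G 0),
      IsFiniteCoresolution R M 0 G d ε ∧ G 0 = M := by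
  let G : ℕ → ModuleCat.{u} R := fun i => match i with
    | 0 => M
    | _ + 1 => ModuleCat.of R PUnit
  have hG : ∀ i, ∀ x : G (i + 1), x = 0 := fun _ _ => rfl
  exact ⟨G, fun _ => 0, LinearMap.id, ⟨Function.injective_id, fun x => ⟨fun _ => ⟨x, rfl⟩,
    fun _ => rfl⟩, fun i x => ⟨fun _ => ⟨0, (hG i x).symm⟩, fun _ => rfl⟩,
    fun i hi => by obtain ⟨j, rfl⟩ := Nat.exists_eq_succ_of_ne_zero hi.ne'; exact hG j⟩, rfl⟩

theorem IsFiniteCoresolution.cons {M E M' : ModuleCat.{u} R} {f : M →ₗ[R] E} {g : E →ₗ[R] M'}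
    (h : ShortExactSeq R M E M' f g) {n : ℕ} {G : ℕ → ModuleCat.{u} R}
    {d : ∀ i, G i →ₗ[R] G (i + 1)} {ε : M' →ₗ[R] G 0} (hG : IsFiniteCoresolution R M' n G d ε) :
    ∃ (G' : ℕ → ModuleCat.{u} R) (d' : ∀ i, G' i →ₗ[R] G' (i + 1)) (ε' : M →ₗ[R] G' 0),
      IsFiniteCoresolution R M (n + 1) G' d' ε' ∧ G' 0 = E ∧ ∀ i, G' (i + 1) = G i := by
  let G' : ℕ → ModuleCat.{u} R := fun i => match i with
    | 0 => E
    | i + 1 => G i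
  let d' : ∀ i, G' i →ₗ[R] G' (i + 1) := fun i => match i with
    | 0 => ε.comp g
    | i + 1 => d i
  refine ⟨G', d', f, ⟨h.1, fun x => ?_, fun i => ?_, fun i hi => ?_⟩, rfl, fun _ => rfl⟩
  · exact (map_eq_zero_iff ε hG.1).trans (h.2.2 x)
  · match i with
    | 0 =>
      intro x
      refine (hG.2.1 x).trans ⟨?_, ?_⟩
      · rintro ⟨m, rfl⟩
        obtain ⟨e, rfl⟩ := h.2.1 m
        exact ⟨e, rfl⟩
      · rintro ⟨e, rfl⟩
        exact ⟨g e, rfl⟩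
    | i + 1 => exact hG.2.2.1 i
  · obtain ⟨j, rfl⟩ : ∃ j, i = j + 1 := ⟨i - 1, by lia⟩
    exact hG.2.2.2 j (by lia)

theorem gwidLE_iff_gwidLERec (M : ModuleCat.{u} R) (n : ℕ) :
    GwidLE R M n ↔ GwidLERec n M := by
  induction n generalizing M with
  | zero =>
    constructor
    · rintro ⟨G, d, ε, h, hG⟩
      let e := LinearEquiv.ofBijective ε h.bijective
      exact (hG 0).of_bijective e.symm.toLinearMap e.symm.bijective
    · intro hM
      obtain ⟨G, d, ε, h, h0⟩ := exists_isFiniteCoresolution_zero M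
      refine ⟨G, d, ε, h, fun i => ?_⟩
      rcases Nat.eq_zero_or_pos i with rfl | hi
      · rwa [h0]
      · exact gorensteinWeakInjective_of_forall_eq_zero (h.2.2.2 i hi)
  | succ n ih =>
    constructor
    · rintro ⟨G, d, ε, h, hG⟩
      obtain ⟨M', g, ε', hs, h'⟩ := h.tail
      exact ⟨G 0, M', ε, g, hs, hG 0, (ih M').1 ⟨_, _, ε', h', fun i => hG (i + 1)⟩⟩
    · rintro ⟨E, M', f, g, hs, hE, hM'⟩
      obtain ⟨G, d, ε, h, hG⟩ := (ih M').2 hM'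
      obtain ⟨G', d', ε', h', h0, hsucc⟩ := h.cons hs
      refine ⟨G', d', ε', h', fun i => ?_⟩
      cases i with
      | zero => rwa [h0]
      | succ i => rw [hsucc]; exact hG i

theorem GwidLERec.ext_subsingleton {n : ℕ} {M : ModuleCat.{u} R} (hM : GwidLERec n M)
    {W : ModuleCat.{u} R} (hW : WeakInjective R W) {i : ℕ} (hi : n ≤ i) :
    Subsingleton (Abelian.Ext.{u} W M (i + 1)) := by
  induction n generalizing M i with
  | zero => exact GorensteinWeakInjective.perp hM W hW i
  | succ n ih =>
    obtain ⟨G, M', f, g, hs, hG, hM'⟩ := hM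
    obtain ⟨j, rfl⟩ : ∃ j, i = j + 1 := ⟨i - 1, by lia⟩
    exact hs.ext_left (ih hM' (by lia)) (hG.perp W hW _)

theorem GwidLERec.gorensteinWeakInjective {n : ℕ} {M : ModuleCat.{u} R} (hM : GwidLERec n M)
    (hperp : WeakInjectivePerp M) : GorensteinWeakInjective R M := by
  induction n generalizing M with
  | zero => exact hM
  | succ n ih =>
    obtain ⟨G, M', f, g, hs, hG, hM'⟩ := hM
    exact hs.gorensteinWeakInjective_left hperp hG (ih hM' (hs.perp_right hperp hG.perp))

theorem GwidLERec.prod_injective {n : ℕ} {M : ModuleCat.{u} R} (hM : GwidLERec n M)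
    {I : ModuleCat.{u} R} (hI : Module.Injective R I) :
    GwidLERec n (ModuleCat.of R (I × M)) := by
  have key : ∀ G : ModuleCat.{u} R, GorensteinWeakInjective R G →
      GorensteinWeakInjective R (ModuleCat.of R (I × G)) := fun G hG =>
    ShortExactSeq.gorensteinWeakInjective_middle (f := LinearMap.inl R I G)
      (g := LinearMap.snd R I G)
      ⟨LinearMap.inl_injective, LinearMap.snd_surjective, Function.Exact.inl_snd⟩
      (gorensteinWeakInjective_of_injective hI) hG
  cases n with
  | zero => exact key M hM
  | succ n =>
    obtain ⟨G, M', f, g, hs, hG, hM'⟩ := hM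
    refine ⟨ModuleCat.of R (I × G), M', LinearMap.id.prodMap f, g.comp (LinearMap.snd R I G),
      ⟨Function.injective_id.prodMap hs.1, hs.2.1.comp LinearMap.snd_surjective, ?_⟩,
      key G hG, hM'⟩
    rintro ⟨i, x⟩
    refine (hs.2.2 x).trans ⟨?_, ?_⟩
    · rintro ⟨m, rfl⟩
      exact ⟨(i, m), rfl⟩
    · rintro ⟨⟨j, m⟩, hm⟩
      exact ⟨m, congrArg Prod.snd hm⟩

theorem ShortExactSeq.gwidLERec_right {n : ℕ} {A B C : ModuleCat.{u} R} {f : A →ₗ[R] B}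
    {g : B →ₗ[R] C} (h : ShortExactSeq R A B C f g) (hA : GorensteinWeakInjective R A)
    (hB : GwidLERec n B) : GwidLERec n C := by
  cases n with
  | zero => exact h.gorensteinWeakInjective_right hA hB
  | succ n =>
    obtain ⟨G, B', a, b, hs, hG, hB'⟩ := hB
    have hba : ∀ x, b (a x) = 0 := fun x => (hs.2.2 _).2 ⟨x, rfl⟩
    let φ : A →ₗ[R] G := a.comp f
    have hX : ShortExactSeq R A G (ModuleCat.of R (G ⧸ LinearMap.range φ)) φ
        (LinearMap.range φ).mkQ :=
      ⟨hs.1.comp h.1, Submodule.mkQ_surjective _, LinearMap.exact_map_mkQ_range φ⟩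
    obtain ⟨c, hc⟩ := h.exists_desc ((LinearMap.range φ).mkQ.comp a)
      (W := ModuleCat.of R (G ⧸ LinearMap.range φ)) fun x => (hX.2.2 _).2 ⟨x, rfl⟩
    obtain ⟨e, he⟩ := hX.exists_desc b fun x => hba _
    refine ⟨_, B', c, e, ⟨?_, fun x => ?_, fun y => ?_⟩,
      hX.gorensteinWeakInjective_right hA hG, hB'⟩
    · rw [injective_iff_map_eq_zero]
      intro x hx
      obtain ⟨x, rfl⟩ := h.2.1 x
      obtain ⟨z, hz⟩ := (hX.2.2 _).1 ((hc x).symm.trans hx)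
      rw [← hs.1 hz]
      exact (h.2.2 _).2 ⟨z, rfl⟩
    · obtain ⟨y, rfl⟩ := hs.2.1 x
      exact ⟨_, he y⟩
    · obtain ⟨y, rfl⟩ := hX.2.1 y
      rw [he, hs.2.2]
      constructor
      · rintro ⟨x, rfl⟩
        exact ⟨g x, hc x⟩
      · rintro ⟨x, hx⟩
        obtain ⟨x, rfl⟩ := h.2.1 x
        rw [hc] at hx
        obtain ⟨z, hz⟩ := (hX.2.2 (y - a x)).1
          ((map_sub _ _ _).trans (sub_eq_zero.2 hx.symm))
        exact ⟨x + f z, by rw [map_add]; exact add_eq_of_eq_sub' hz⟩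

theorem ShortExactSeq.exists_gwidLERec_cokernel {k : ℕ} {M I C : ModuleCat.{u} R}
    {e : M →ₗ[R] I} {p : I →ₗ[R] C} (h : ShortExactSeq R M I C e p) (hI : Module.Injective R I)
    (hM : GwidLERec k M) : ∃ k, GwidLERec k C := by
  cases k with
  | zero =>
    exact ⟨0, h.gorensteinWeakInjective_right hM (gorensteinWeakInjective_of_injective hI)⟩
  | succ k =>
    obtain ⟨G, M', f, g, hs, hG, hM'⟩ := hM
    obtain ⟨t, ht⟩ := hI.out f hs.1 e
    have hpe : ∀ x, p (e x) = 0 := fun x => (h.2.2 _).2 ⟨x, rfl⟩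
    obtain ⟨c, hc⟩ := hs.exists_desc (p.comp t) fun x => by simp [ht, hpe]
    have hQ : ShortExactSeq R G (ModuleCat.of R (I × M')) C (t.prod g)
        (p.coprod (-c)) := by
      refine ⟨?_, fun x => ?_, fun w => ⟨fun hw => ?_, ?_⟩⟩
      · rw [injective_iff_map_eq_zero]
        intro x hx
        obtain ⟨m, rfl⟩ := (hs.2.2 x).1 (congrArg Prod.snd hx)
        have hm : t (f m) = 0 := congrArg Prod.fst hx
        rw [ht, map_eq_zero_iff _ h.1] at hm
        rw [hm, map_zero]
      · obtain ⟨i, rfl⟩ := h.2.1 x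
        exact ⟨(i, 0), by simp⟩
      · obtain ⟨i, m'⟩ := w
        obtain ⟨y, rfl⟩ := hs.2.1 m'
        have hi : p (i - t y) = 0 := by
          simpa [hc, sub_eq_add_neg] using hw
        obtain ⟨m, hm⟩ := (h.2.2 _).1 hi
        refine ⟨y + f m, Prod.ext ?_ ?_⟩
        · simp [ht, hm]
        · simp [show g (f m) = 0 from (hs.2.2 _).2 ⟨m, rfl⟩]
      · rintro ⟨y, rfl⟩
        simp [hc]
    exact ⟨k, hQ.gwidLERec_right hG (hM'.prod_injective hI)⟩

theorem IsFiniteCoresolution.gorensteinWeakInjective_last {M : ModuleCat.{u} R} {n : ℕ}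
    {G : ℕ → ModuleCat.{u} R} {d : ∀ i, G i →ₗ[R] G (i + 1)} {ε : M →ₗ[R] G 0}
    (h : IsFiniteCoresolution R M n G d ε) (hG : ∀ i < n, Module.Injective R (G i))
    (hM : ∃ k, GwidLERec k M)
    (hext : ∀ W : ModuleCat.{u} R, WeakInjective R W → ∀ i, n ≤ i →
      Subsingleton (Abelian.Ext.{u} W M (i + 1))) :
    GorensteinWeakInjective R (G n) := by
  induction n generalizing M G with
  | zero =>
    obtain ⟨k, hk⟩ := hM
    exact (hk.gorensteinWeakInjective fun W hW i => hext W hW i i.zero_le).of_bijective ε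
      h.bijective
  | succ n ih =>
    obtain ⟨M', g, ε', hs, h'⟩ := h.tail
    obtain ⟨k, hk⟩ := hM
    exact ih h' (fun i hi => hG (i + 1) (by lia))
      (hs.exists_gwidLERec_cokernel (hG 0 n.succ_pos) hk) fun W hW i hi =>
        hs.ext_right (hext W hW (i + 1) (by lia))
          (ext_injective_subsingleton W (hG 0 n.succ_pos) i)

theorem exists_isFiniteCoresolution_injective (M : ModuleCat.{u} R) (n : ℕ) :
    ∃ (G : ℕ → ModuleCat.{u} R) (d : ∀ i, G i →ₗ[R] G (i + 1)) (ε : M →ₗ[R] G 0),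
      IsFiniteCoresolution R M n G d ε ∧ ∀ i < n, Module.Injective R (G i) := by
  induction n generalizing M with
  | zero =>
    obtain ⟨G, d, ε, h, -⟩ := exists_isFiniteCoresolution_zero M
    exact ⟨G, d, ε, h, fun i hi => absurd hi i.not_lt_zero⟩
  | succ n ih =>
    obtain ⟨I, C, ι, π, hI, hs⟩ := exists_injective_embedding M
    obtain ⟨G, d, ε, h, hG⟩ := ih C
    obtain ⟨G', d', ε', h', h0, hsucc⟩ := h.cons hs
    refine ⟨G', d', ε', h', fun i hi => ?_⟩
    cases i with
    | zero => rwa [h0]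
    | succ i => rw [hsucc]; exact hG i (by lia)

variable (R)

/-- For `M` of finite Gorenstein weak injective dimension: `Gwid_R M ≤ n` iff
`Ext^i_R(W, M) = 0` for every weak injective `W` and `i ≥ n + 1`, iff for every exact
sequence `0 → M → I^0 → ⋯ → I^{n-1} → C^n → 0` with the `I^i` injective, `C^n` is
Gorenstein weak injective. -/
theorem gwidLE_iff (M : ModuleCat.{u} R) (hfin : ∃ k : ℕ, GwidLE R M k) (n : ℕ) :
    (GwidLE R M n ↔
      ∀ W : ModuleCat.{u} R, WeakInjective R W → ∀ i : ℕ, n + 1 ≤ i → ExtVanish R i W M) ∧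
    (GwidLE R M n ↔
      ∀ (G : ℕ → ModuleCat.{u} R) (d : ∀ i, G i →ₗ[R] G (i + 1)) (ε : M →ₗ[R] G 0),
        IsFiniteCoresolution R M n G d ε → (∀ i < n, Module.Injective R (G i)) →
        GorensteinWeakInjective R (G n)) := by
  have gwid_to_ext : GwidLE R M n → ∀ W : ModuleCat.{u} R, WeakInjective R W →
      ∀ i : ℕ, n + 1 ≤ i → ExtVanish R i W M := by
    intro h W hW i hi
    obtain ⟨j, rfl⟩ : ∃ j, i = j + 1 := ⟨i - 1, by lia⟩
    exact (extVanish_succ_iff R j W M).2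
      (((gwidLE_iff_gwidLERec M n).1 h).ext_subsingleton hW (by lia))
  have ext_to_cosyzygy : (∀ W : ModuleCat.{u} R, WeakInjective R W →
      ∀ i : ℕ, n + 1 ≤ i → ExtVanish R i W M) →
      ∀ (G : ℕ → ModuleCat.{u} R) (d : ∀ i, G i →ₗ[R] G (i + 1)) (ε : M →ₗ[R] G 0),
        IsFiniteCoresolution R M n G d ε → (∀ i < n, Module.Injective R (G i)) →
        GorensteinWeakInjective R (G n) := fun h G d ε hG hI =>
    hG.gorensteinWeakInjective_last hI
      (hfin.imp fun k hk => (gwidLE_iff_gwidLERec M k).1 hk)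
      fun W hW i hi => (extVanish_succ_iff R i W M).1 (h W hW (i + 1) (by lia))
  have cosyzygy_to_gwid : (∀ (G : ℕ → ModuleCat.{u} R) (d : ∀ i, G i →ₗ[R] G (i + 1))
      (ε : M →ₗ[R] G 0), IsFiniteCoresolution R M n G d ε →
      (∀ i < n, Module.Injective R (G i)) → GorensteinWeakInjective R (G n)) →
      GwidLE R M n := by
    intro h
    obtain ⟨G, d, ε, hG, hI⟩ := exists_isFiniteCoresolution_injective M n
    refine ⟨G, d, ε, hG, fun i => ?_⟩
    rcases lt_trichotomy i n with hi | rfl | hi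
    · exact gorensteinWeakInjective_of_injective (hI i hi)
    · exact h G d ε hG hI
    · exact gorensteinWeakInjective_of_forall_eq_zero (hG.2.2.2 i hi)
  exact ⟨⟨gwid_to_ext, fun h => cosyzygy_to_gwid (ext_to_cosyzygy h)⟩,
    ⟨fun h => ext_to_cosyzygy (gwid_to_ext h), cosyzygy_to_gwid⟩⟩
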